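/- arXiv:1310.1509 — 3 statements merged into one kernel-verified Lean document; each statement's English description precedes it below -/
import Mathlib

section
/- Let Ω ⊆ ℂ be an open set whose family of connected components is locally finite (every point of ℂ has a neighborhood meeting only finitely many connected components of Ω). Then there exists a sequence (K_m)_{m∈ℕ} of compact subsets of ℂ ∖ Ω, each with connected complement ℂ ∖ K_m, such that every compact set K ⊆ ℂ ∖ Ω with ℂ ∖ K connected is contained in K_m for some m. -/
/-!
Fix a compact `J` which misses `Ω` and has connected complement, and a compact neighbourhood `L`
of `J`. By local finiteness only finitely many components of `Ω` meet `L`, so some compact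
`Q ⊆ Jᶜ` contains the frontier of `L` and a point of each of these components. Let `U` be open and
connected with `Q ⊆ U ⊆ Jᶜ`. Then `Ω ∪ (U ∪ Lᶜ)` is connected: no piece of `Lᶜ` can be split off
from `U`, as it would also split off from `Jᶜ`, and every component of `Ω` meets `U` or `Lᶜ`. Hence
`(Ω ∪ (U ∪ Lᶜ))ᶜ` is a compact set with connected complement which misses `Ω` and contains `J`.
Countably many such sets suffice, since `L` may be taken from a compact exhaustion and `U` from a
countable basis of connected sets that is closed under unions of intersecting members.
-/

open Set TopologicalSpace

section ConnectedBasis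

theorem exists_countable_isTopologicalBasis_isPreconnected_union_mem (X : Type*)
    [TopologicalSpace X] [SecondCountableTopology X] [LocallyConnectedSpace X] :
    ∃ 𝒰 : Set (Set X), 𝒰.Countable ∧ IsTopologicalBasis 𝒰 ∧ (∀ U ∈ 𝒰, IsPreconnected U) ∧
      ∀ U ∈ 𝒰, ∀ V ∈ 𝒰, (U ∩ V).Nonempty → U ∪ V ∈ 𝒰 := by
  obtain ⟨ℬ, hℬ, hℬc, hbasis⟩ :=
    (IsTopologicalBasis.isOpen_isPreconnected (α := X)).exists_countable
  let 𝒰 : Set (Set X) := {U | IsPreconnected U ∧ ∃ 𝒮 : Set (Set X), (𝒮.Finite ∧ 𝒮 ⊆ ℬ) ∧ ⋃₀ 𝒮 = U}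
  refine ⟨𝒰, ?_, ?_, fun U hU ↦ hU.1, ?_⟩
  · exact ((countable_ofPred_finite_subset hℬc).image sUnion).mono fun U hU ↦ hU.2
  · refine hbasis.of_isOpen_of_subset ?_ fun B hB ↦
      ⟨(hℬ hB).2, {B}, ⟨finite_singleton B, singleton_subset_iff.2 hB⟩, sUnion_singleton B⟩
    rintro _ ⟨-, 𝒮, ⟨-, h𝒮⟩, rfl⟩
    exact isOpen_sUnion fun B hB ↦ hbasis.isOpen (h𝒮 hB)
  · rintro _ ⟨hU, 𝒮, ⟨h𝒮, h𝒮ℬ⟩, rfl⟩ _ ⟨hV, 𝒯, ⟨h𝒯, h𝒯ℬ⟩, rfl⟩ hUV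
    exact ⟨hU.union' hUV hV, 𝒮 ∪ 𝒯, ⟨h𝒮.union h𝒯, union_subset h𝒮ℬ h𝒯ℬ⟩, sUnion_union 𝒮 𝒯⟩

variable {X : Type*} [TopologicalSpace X] {𝒰 : Set (Set X)} {W : Set X}

theorem exists_mem_basis_pair_subset_of_isPreconnected (h𝒰 : IsTopologicalBasis 𝒰)
    (hunion : ∀ U ∈ 𝒰, ∀ V ∈ 𝒰, (U ∩ V).Nonempty → U ∪ V ∈ 𝒰)
    (hW : IsPreconnected W) (hWo : IsOpen W) {x y : X} (hx : x ∈ W) (hy : y ∈ W) :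
    ∃ U ∈ 𝒰, x ∈ U ∧ y ∈ U ∧ U ⊆ W := by
  refine hW.induction₂ (fun x y ↦ ∃ U ∈ 𝒰, x ∈ U ∧ y ∈ U ∧ U ⊆ W) ?_ ?_ ?_ hx hy
  · intro a ha
    obtain ⟨U, hU, haU, hUW⟩ := h𝒰.exists_subset_of_mem_open ha hWo
    filter_upwards [mem_nhdsWithin_of_mem_nhds (h𝒰.mem_nhds hU haU)] with b hb
    exact ⟨U, hU, haU, hb, hUW⟩
  · rintro a b c - - - ⟨U, hU, haU, hbU, hUW⟩ ⟨V, hV, hbV, hcV, hVW⟩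
    exact ⟨U ∪ V, hunion U hU V hV ⟨b, hbU, hbV⟩, .inl haU, .inr hcV, union_subset hUW hVW⟩
  · rintro a b - - ⟨U, hU, haU, hbU, hUW⟩
    exact ⟨U, hU, hbU, haU, hUW⟩

theorem exists_mem_basis_between_isCompact_isConnected (h𝒰 : IsTopologicalBasis 𝒰)
    (hunion : ∀ U ∈ 𝒰, ∀ V ∈ 𝒰, (U ∩ V).Nonempty → U ∪ V ∈ 𝒰)
    {Q : Set X} (hQ : IsCompact Q) (hW : IsConnected W) (hWo : IsOpen W) (hQW : Q ⊆ W) :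
    ∃ U ∈ 𝒰, U.Nonempty ∧ Q ⊆ U ∧ U ⊆ W := by
  obtain ⟨w, hw⟩ := hW.nonempty
  have hpair {y : X} (hy : y ∈ W) : ∃ U ∈ 𝒰, w ∈ U ∧ y ∈ U ∧ U ⊆ W :=
    exists_mem_basis_pair_subset_of_isPreconnected h𝒰 hunion hW.isPreconnected hWo hw hy
  suffices ∃ U ∈ 𝒰, w ∈ U ∧ Q ⊆ U ∧ U ⊆ W by
    obtain ⟨U, hU, hwU, hQU, hUW⟩ := this
    exact ⟨U, hU, ⟨w, hwU⟩, hQU, hUW⟩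
  refine hQ.induction_on (p := fun T ↦ ∃ U ∈ 𝒰, w ∈ U ∧ T ⊆ U ∧ U ⊆ W) ?_ ?_ ?_ ?_
  · obtain ⟨U, hU, hwU, -, hUW⟩ := hpair hw
    exact ⟨U, hU, hwU, empty_subset U, hUW⟩
  · rintro S T hST ⟨U, hU, hwU, hTU, hUW⟩
    exact ⟨U, hU, hwU, hST.trans hTU, hUW⟩
  · rintro S T ⟨U, hU, hwU, hSU, hUW⟩ ⟨V, hV, hwV, hTV, hVW⟩
    exact ⟨U ∪ V, hunion U hU V hV ⟨w, hwU, hwV⟩, .inl hwU, union_subset_union hSU hTV,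
      union_subset hUW hVW⟩
  · intro y hy
    obtain ⟨U, hU, hwU, hyU, hUW⟩ := hpair (hQW hy)
    exact ⟨U, mem_nhdsWithin_of_mem_nhds (h𝒰.mem_nhds hU hyU), U, hU, hwU, Subset.rfl, hUW⟩

end ConnectedBasis

section Unions

variable {X : Type*} [TopologicalSpace X]

theorem isPreconnected_union_of_frontier_inter_subset {U V W : Set X} (hW : IsPreconnected W)
    (hU : IsPreconnected U) (hV : IsOpen V) (hUW : U ⊆ W) (hVW : V ⊆ W)
    (hfr : frontier V ∩ W ⊆ U) : IsPreconnected (U ∪ V) := by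
  rw [isPreconnected_iff_subset_of_disjoint] at hU ⊢
  intro A B hA hB hcover hdisj
  wlog hUA : U ⊆ A generalizing A B
  · have hUB : U ⊆ B := (hU A B hA hB (subset_union_left.trans hcover)
      (subset_empty_iff.1 (hdisj ▸ inter_subset_inter_left _ subset_union_left))).resolve_left hUA
    exact (this B A hB hA (union_comm A B ▸ hcover) (inter_comm A B ▸ hdisj) hUB).symm
  -- A separation of `U ∪ V` with `U` on the side `A` extends to a separation of `W`.
  have hWcover : W ⊆ A ∪ (closure V)ᶜ ∪ B ∩ V := by
    intro x hx
    by_cases hxV : x ∈ V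
    · exact (hcover (.inr hxV)).imp .inl fun hxB ↦ ⟨hxB, hxV⟩
    · by_cases hxcl : x ∈ closure V
      · exact .inl (.inl (hUA (hfr ⟨hV.frontier_eq ▸ ⟨hxcl, hxV⟩, hx⟩)))
      · exact .inl (.inr hxcl)
  have hWdisj : W ∩ ((A ∪ (closure V)ᶜ) ∩ (B ∩ V)) = ∅ := by
    refine eq_empty_of_forall_notMem ?_
    rintro x ⟨-, hxA | hxcl, hxB, hxV⟩
    · exact hdisj.subset ⟨.inr hxV, hxA, hxB⟩
    · exact hxcl (subset_closure hxV)
  rcases isPreconnected_iff_subset_of_disjoint.1 hW _ _ (hA.union isClosed_closure.isOpen_compl)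
    (hB.inter hV) hWcover hWdisj with hWA | hWB
  · exact .inl (union_subset hUA fun x hx ↦
      (hWA (hVW hx)).resolve_right fun hxcl ↦ hxcl (subset_closure hx))
  · exact .inr ((union_subset hUW hVW).trans fun x hx ↦ (hWB hx).1)

theorem isPreconnected_union_of_connectedComponentIn_inter_nonempty {Ω S : Set X}
    (hS : IsPreconnected S) (hΩS : ∀ x ∈ Ω, (connectedComponentIn Ω x ∩ S).Nonempty) :
    IsPreconnected (Ω ∪ S) := by
  have hunion (x : X) (hx : x ∈ Ω) : IsPreconnected (connectedComponentIn Ω x ∪ S) :=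
    isPreconnected_connectedComponentIn.union' (hΩS x hx) hS
  rcases S.eq_empty_or_nonempty with rfl | ⟨s, hs⟩
  · have hΩ : Ω = ∅ := eq_empty_of_forall_notMem fun x hx ↦ by simpa using hΩS x hx
    simpa [hΩ] using isPreconnected_empty
  · refine isPreconnected_of_forall s ?_
    rintro x (hx | hx)
    · exact ⟨_, union_subset_union_left S (connectedComponentIn_subset Ω x), .inr hs,
        .inl (mem_connectedComponentIn hx), hunion x hx⟩
    · exact ⟨S, subset_union_right, hs, hx, hS⟩

end Unions

theorem exists_finite_subset_forall_inter_nonempty {X ι : Type*} [TopologicalSpace X]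
    {f : ι → Set X} (hf : LocallyFinite f) {L : Set X} (hL : IsCompact L) :
    ∃ F ⊆ ⋃ i, f i, F.Finite ∧ ∀ i, (f i ∩ L).Nonempty → (f i ∩ F).Nonempty := by
  have hfin : {i | (f i ∩ L).Nonempty}.Finite := hf.finite_nonempty_inter_compact hL
  have := hfin.to_subtype
  choose p hp using fun i : {i | (f i ∩ L).Nonempty} ↦ i.2
  exact ⟨range p, range_subset_iff.2 fun i ↦ mem_iUnion_of_mem i.1 (hp i).1, finite_range p,
    fun i hi ↦ ⟨p ⟨i, hi⟩, (hp ⟨i, hi⟩).1, mem_range_self _⟩⟩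

section Exhaustion

variable {X : Type*} [TopologicalSpace X] [T2Space X] {Ω : Set X}

theorem exists_mem_basis_isConnected_union_compl {𝒰 : Set (Set X)} (h𝒰 : IsTopologicalBasis 𝒰)
    (hconn : ∀ U ∈ 𝒰, IsPreconnected U)
    (hunion : ∀ U ∈ 𝒰, ∀ V ∈ 𝒰, (U ∩ V).Nonempty → U ∪ V ∈ 𝒰)
    (hlf : LocallyFinite fun C : connectedComponentIn Ω '' Ω ↦ (C : Set X))
    {J L : Set X} (hJ : IsClosed J) (hJΩ : J ⊆ Ωᶜ) (hJc : IsConnected Jᶜ)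
    (hL : IsCompact L) (hJL : J ⊆ interior L) :
    ∃ U ∈ 𝒰, U ⊆ Jᶜ ∧ IsConnected (Ω ∪ (U ∪ Lᶜ)) := by
  obtain ⟨F, hFΩ, hF, hFL⟩ := exists_finite_subset_forall_inter_nonempty hlf hL
  have hFJ : F ⊆ Jᶜ := by
    refine hFΩ.trans (iUnion_subset ?_)
    rintro ⟨_, x, -, rfl⟩
    exact (connectedComponentIn_subset Ω x).trans (subset_compl_comm.1 hJΩ)
  have hfrJ : frontier L ⊆ Jᶜ := fun x hx hxJ ↦ hx.2 (hJL hxJ)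
  have hfr : IsCompact (frontier L) :=
    hL.of_isClosed_subset isClosed_frontier hL.isClosed.frontier_subset
  obtain ⟨U, hU, hUne, hQU, hUJ⟩ := exists_mem_basis_between_isCompact_isConnected h𝒰 hunion
    (hfr.union hF.isCompact) hJc hJ.isOpen_compl (union_subset hfrJ hFJ)
  refine ⟨U, hU, hUJ, hUne.inl.inr, ?_⟩
  have hUL : IsPreconnected (U ∪ Lᶜ) :=
    isPreconnected_union_of_frontier_inter_subset hJc.isPreconnected (hconn U hU)
      hL.isClosed.isOpen_compl hUJ (compl_subset_compl.2 (hJL.trans interior_subset))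
      (frontier_compl L ▸ inter_subset_left.trans (subset_union_left.trans hQU))
  refine isPreconnected_union_of_connectedComponentIn_inter_nonempty hUL fun x hx ↦ ?_
  by_cases hxL : x ∈ L
  · have hCF : (connectedComponentIn Ω x ∩ F).Nonempty :=
      hFL ⟨_, mem_image_of_mem _ hx⟩ ⟨x, mem_connectedComponentIn hx, hxL⟩
    exact hCF.mono
      (inter_subset_inter_right _ ((subset_union_right.trans hQU).trans subset_union_left))
  · exact ⟨x, mem_connectedComponentIn hx, .inr hxL⟩

variable [SecondCountableTopology X] [WeaklyLocallyCompactSpace X] [LocallyConnectedSpace X]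

theorem exists_countable_cofinal_isCompact_isConnected_compl (hΩ : IsOpen Ω)
    (hlf : LocallyFinite fun C : connectedComponentIn Ω '' Ω ↦ (C : Set X)) :
    ∃ 𝒦 : Set (Set X), 𝒦.Countable ∧
      (∀ K ∈ 𝒦, IsCompact K ∧ K ⊆ Ωᶜ ∧ IsConnected Kᶜ) ∧
      ∀ J : Set X, IsCompact J → J ⊆ Ωᶜ → IsConnected Jᶜ → ∃ K ∈ 𝒦, J ⊆ K := by
  obtain ⟨𝒰, h𝒰c, h𝒰, hconn, hunion⟩ :=
    exists_countable_isTopologicalBasis_isPreconnected_union_mem X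
  let L : CompactExhaustion X := .choice X
  let G (p : ℕ × Set X) : Set X := Ω ∪ (p.2 ∪ (L p.1)ᶜ)
  refine ⟨(fun p ↦ (G p)ᶜ) '' {p | p.2 ∈ 𝒰 ∧ IsConnected (G p)}, ?_, ?_, ?_⟩
  · refine Countable.image ((countable_univ.prod h𝒰c).mono ?_) _
    exact fun p hp ↦ ⟨mem_univ p.1, hp.1⟩
  · rintro _ ⟨⟨n, U⟩, ⟨hU, hG⟩, rfl⟩
    have hGo : IsOpen (G (n, U)) :=
      hΩ.union ((h𝒰.isOpen hU).union (L.isClosed n).isOpen_compl)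
    refine ⟨(L.isCompact n).of_isClosed_subset hGo.isClosed_compl ?_,
      compl_subset_compl.2 subset_union_left, (compl_compl (G (n, U))).symm ▸ hG⟩
    exact compl_subset_comm.1 (subset_union_right.trans subset_union_right)
  · intro J hJ hJΩ hJc
    obtain ⟨n, hn⟩ := L.exists_superset_of_isCompact hJ
    obtain ⟨U, hU, hUJ, hG⟩ := exists_mem_basis_isConnected_union_compl h𝒰 hconn hunion hlf
      hJ.isClosed hJΩ hJc (L.isCompact (n + 1)) (hn.trans (L.subset_interior_succ n))
    refine ⟨(G (n + 1, U))ᶜ, ⟨(n + 1, U), ⟨hU, hG⟩, rfl⟩, subset_compl_comm.1 ?_⟩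
    exact union_subset (subset_compl_comm.1 hJΩ) (union_subset hUJ
      (compl_subset_compl.2 (hn.trans (L.subset n.le_succ))))

theorem exists_exhaustion_of_compacts_in_complement_general [ConnectedSpace X] (hΩ : IsOpen Ω)
    (hlf : LocallyFinite fun C : connectedComponentIn Ω '' Ω ↦ (C : Set X)) :
    ∃ K : ℕ → Set X,
      (∀ m : ℕ, IsCompact (K m) ∧ K m ⊆ Ωᶜ ∧ IsConnected (K m)ᶜ) ∧
      ∀ J : Set X, IsCompact J → J ⊆ Ωᶜ → IsConnected Jᶜ → ∃ m : ℕ, J ⊆ K m := by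
  obtain ⟨𝒦, h𝒦c, h𝒦, hcofinal⟩ := exists_countable_cofinal_isCompact_isConnected_compl hΩ hlf
  have hempty : IsConnected (∅ : Set X)ᶜ := compl_empty (α := X) ▸ isConnected_univ
  obtain ⟨K₀, hK₀, -⟩ := hcofinal ∅ isCompact_empty (empty_subset _) hempty
  obtain ⟨K, rfl⟩ := h𝒦c.exists_eq_range ⟨K₀, hK₀⟩
  exact ⟨K, forall_mem_range.1 h𝒦, by simpa only [exists_range_iff] using hcofinal⟩

end Exhaustion

/-- **Proposition 2.3.** If the connected components of an open set `Ω ⊆ ℂ` form a locally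
finite family, then there is a sequence of compact subsets of `ℂ ∖ Ω`, each with connected
complement, which absorbs every compact subset of `ℂ ∖ Ω` with connected complement. -/
theorem exists_exhaustion_of_compacts_in_complement
    (Ω : Set ℂ) (hΩ : IsOpen Ω)
    (hlf : ∀ z : ℂ, ∃ U ∈ nhds z,
      {C : Set ℂ | (∃ x ∈ Ω, C = connectedComponentIn Ω x) ∧ (C ∩ U).Nonempty}.Finite) :
    ∃ K : ℕ → Set ℂ,
      (∀ m : ℕ, IsCompact (K m) ∧ K m ⊆ Ωᶜ ∧ IsConnected (K m)ᶜ) ∧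
      ∀ J : Set ℂ, IsCompact J → J ⊆ Ωᶜ → IsConnected Jᶜ → ∃ m : ℕ, J ⊆ K m := by
  exact exists_exhaustion_of_compacts_in_complement_general hΩ fun z ↦ (hlf z).imp fun U hU ↦
    ⟨hU.1, (hU.2.preimage Subtype.val_injective.injOn).subset fun C hC ↦
      ⟨C.2.imp fun _ ↦ And.imp_right Eq.symm, hC⟩⟩
end

section
/- Let Ω ⊆ ℂ be an open set whose family of connected components is locally finite (every point of ℂ has a neighborhood meeting only finitely many connected components of Ω). Then there exists a sequence (K_m)_{m∈ℕ} of compact subsets of ℂ ∖ closure(Ω), each with connected complement ℂ ∖ K_m, such that every compact set K ⊆ ℂ ∖ closure(Ω) with ℂ ∖ K connected is contained in K_m for some m. -/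
/-!
Let `J ⊆ U` be compact with connected complement and let `L` be a compact set whose interior
contains `J`. Covering the compact set `frontier L ∪ (L \ U) ⊆ Jᶜ` by finitely many connected
basic open sets and joining these to one another inside `Jᶜ` gives a connected open set `T ⊆ Jᶜ`.
A relatively clopen part of `Lᶜ ∪ T` disjoint from `T` stays away from `frontier L ⊆ T`, hence is
clopen in the whole connected space. So `Lᶜ ∪ T` is connected, and `L \ T` is a compact subset of
`U` containing `J` with connected complement. Countably many pairs `(L, T)` suffice: `L` runs
through a compact exhaustion and `T` through finite unions of members of a countable basis.
-/

open Set TopologicalSpace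

section

variable {X : Type*} [TopologicalSpace X]

theorem isPreconnected_union_of_frontier_subset [PreconnectedSpace X] {S T : Set X}
    (hT : IsPreconnected T) (hST : frontier S ⊆ T) : IsPreconnected (S ∪ T) := by
  rw [isPreconnected_iff_subset_of_disjoint]
  intro u v hu hv hcover hdisj
  wlog hTu : T ⊆ u generalizing u v
  · have hTv : T ⊆ v :=
      (isPreconnected_iff_subset_of_disjoint.1 hT u v hu hv (subset_union_right.trans hcover)
        (subset_eq_empty (inter_subset_inter_left _ subset_union_right) hdisj)).resolve_left hTu
    exact (this v u hv hu (union_comm u v ▸ hcover) (inter_comm u v ▸ hdisj) hTv).symm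
  have not_mem_both {x : X} (hx : x ∈ S ∪ T) (hxu : x ∈ u) (hxv : x ∈ v) : False :=
    hdisj.subset ⟨hx, hxu, hxv⟩
  have closure_subset : closure S ⊆ S ∪ T := by
    rw [closure_eq_self_union_frontier]
    exact union_subset_union_right S hST
  have hopen : (S ∪ T) ∩ v = interior S ∩ v := by
    refine Subset.antisymm (fun x ⟨hx, hxv⟩ ↦ ⟨?_, hxv⟩)
      (inter_subset_inter_left v (interior_subset.trans subset_union_left))
    have hxT : x ∉ T := fun hxT ↦ not_mem_both hx (hTu hxT) hxv
    by_contra hxS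
    exact hxT (hST ⟨subset_closure (hx.resolve_right hxT), hxS⟩)
  have hclosed : (S ∪ T) ∩ v = closure S ∩ uᶜ := by
    refine Subset.antisymm (fun x ⟨hx, hxv⟩ ↦ ?_) fun x ⟨hx, hxu⟩ ↦
      ⟨closure_subset hx, (hcover (closure_subset hx)).resolve_left hxu⟩
    have hxu : x ∉ u := fun hxu ↦ not_mem_both hx hxu hxv
    exact ⟨subset_closure (hx.resolve_right fun hxT ↦ hxu (hTu hxT)), hxu⟩
  have hclopen : IsClopen ((S ∪ T) ∩ v) :=
    ⟨hclosed ▸ isClosed_closure.inter hu.isClosed_compl, hopen ▸ isOpen_interior.inter hv⟩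
  obtain hempty | huniv := isClopen_iff.1 hclopen
  · exact .inl fun x hx ↦ (hcover hx).resolve_right fun hxv ↦ hempty.subset ⟨hx, hxv⟩
  · exact .inr fun x _ ↦ (huniv.ge (mem_univ x)).2

/-- A topological basis closed under unions of overlapping members. In such a basis the members
inside a connected open set `V` containing a fixed point of `V` are directed, so that they absorb
the compact subsets of `V`. -/
structure IsChainingBasis (𝒯 : Set (Set X)) : Prop where
  isTopologicalBasis : IsTopologicalBasis 𝒯
  union_mem : ∀ S ∈ 𝒯, ∀ T ∈ 𝒯, (S ∩ T).Nonempty → S ∪ T ∈ 𝒯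

namespace IsChainingBasis

variable {𝒯 : Set (Set X)} {V : Set X}

theorem exists_mem_mem (h𝒯 : IsChainingBasis 𝒯) (hV : IsPreconnected V) (hVo : IsOpen V)
    {x y : X} (hx : x ∈ V) (hy : y ∈ V) : ∃ T ∈ 𝒯, x ∈ T ∧ y ∈ T ∧ T ⊆ V := by
  refine hV.induction₂ (fun x y ↦ ∃ T ∈ 𝒯, x ∈ T ∧ y ∈ T ∧ T ⊆ V) (fun x hx ↦ ?_) ?_ ?_ hx hy
  · obtain ⟨T, hT, hxT, hTV⟩ := h𝒯.isTopologicalBasis.exists_subset_of_mem_open hx hVo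
    filter_upwards [mem_nhdsWithin_of_mem_nhds (h𝒯.isTopologicalBasis.mem_nhds hT hxT)] with y hyT
    exact ⟨T, hT, hxT, hyT, hTV⟩
  · rintro x y z - - - ⟨S, hS, hxS, hyS, hSV⟩ ⟨T, hT, hyT, hzT, hTV⟩
    exact ⟨S ∪ T, h𝒯.union_mem S hS T hT ⟨y, hyS, hyT⟩, .inl hxS, .inr hzT, union_subset hSV hTV⟩
  · rintro x y - - ⟨T, hT, hxT, hyT, hTV⟩
    exact ⟨T, hT, hyT, hxT, hTV⟩

theorem exists_mem_superset_of_isCompact (h𝒯 : IsChainingBasis 𝒯) (hV : IsPreconnected V)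
    (hVo : IsOpen V) {x : X} (hx : x ∈ V) {C : Set X} (hC : IsCompact C) (hCV : C ⊆ V) :
    ∃ T ∈ 𝒯, x ∈ T ∧ C ⊆ T ∧ T ⊆ V := by
  refine hC.induction_on (p := fun C ↦ ∃ T ∈ 𝒯, x ∈ T ∧ C ⊆ T ∧ T ⊆ V) ?_ ?_ ?_ fun y hy ↦ ?_
  · obtain ⟨T, hT, hxT, -, hTV⟩ := h𝒯.exists_mem_mem hV hVo hx hx
    exact ⟨T, hT, hxT, empty_subset T, hTV⟩
  · rintro C D hCD ⟨T, hT, hxT, hDT, hTV⟩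
    exact ⟨T, hT, hxT, hCD.trans hDT, hTV⟩
  · rintro C D ⟨S, hS, hxS, hCS, hSV⟩ ⟨T, hT, hxT, hDT, hTV⟩
    exact ⟨S ∪ T, h𝒯.union_mem S hS T hT ⟨x, hxS, hxT⟩, .inl hxS, union_subset_union hCS hDT,
      union_subset hSV hTV⟩
  · obtain ⟨T, hT, hxT, hyT, hTV⟩ := h𝒯.exists_mem_mem hV hVo hx (hCV hy)
    exact ⟨T, mem_nhdsWithin_of_mem_nhds (h𝒯.isTopologicalBasis.mem_nhds hT hyT),
      T, hT, hxT, Subset.rfl, hTV⟩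

end IsChainingBasis

variable (X) in
theorem exists_countable_isChainingBasis_isPreconnected
    [LocallyConnectedSpace X] [SecondCountableTopology X] :
    ∃ 𝒯 : Set (Set X), 𝒯.Countable ∧ IsChainingBasis 𝒯 ∧ ∀ T ∈ 𝒯, IsPreconnected T := by
  obtain ⟨b, hb_conn, hb_count, hb⟩ :=
    (IsTopologicalBasis.isOpen_isPreconnected (α := X)).exists_countable
  refine ⟨sUnion '' {t | t.Finite ∧ t ⊆ b} ∩ {T | IsPreconnected T},
    ((countable_ofPred_finite_subset hb_count).image _).mono inter_subset_left,
    ⟨hb.of_isOpen_of_subset ?_ ?_, ?_⟩, fun T hT ↦ hT.2⟩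
  · rintro _ ⟨⟨t, ⟨-, htb⟩, rfl⟩, -⟩
    exact isOpen_sUnion fun B hB ↦ hb.isOpen (htb hB)
  · exact fun B hB ↦ ⟨⟨{B}, ⟨finite_singleton B, singleton_subset_iff.2 hB⟩, sUnion_singleton B⟩,
      (hb_conn hB).2⟩
  · rintro _ ⟨⟨s, ⟨hs, hsb⟩, rfl⟩, hs_conn⟩ _ ⟨⟨t, ⟨ht, htb⟩, rfl⟩, ht_conn⟩ hst
    exact ⟨⟨s ∪ t, ⟨hs.union ht, union_subset hsb htb⟩, sUnion_union s t⟩,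
      hs_conn.union' hst ht_conn⟩

theorem exists_diff_superset_of_isConnected_compl [PreconnectedSpace X] [T2Space X]
    {𝒯 : Set (Set X)} (h𝒯 : IsChainingBasis 𝒯) (h𝒯_conn : ∀ T ∈ 𝒯, IsPreconnected T)
    {U L J : Set X} (hU : IsOpen U) (hL : IsCompact L) (hJ : IsCompact J)
    (hJU : J ⊆ U) (hJL : J ⊆ interior L) (hJ_conn : IsConnected Jᶜ) :
    ∃ T ∈ 𝒯, J ⊆ L \ T ∧ L \ T ⊆ U ∧ IsConnected (L \ T)ᶜ := by
  obtain ⟨x, hx⟩ := hJ_conn.nonempty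
  have hC : IsCompact (frontier L ∪ L \ U) :=
    (hL.of_isClosed_subset isClosed_frontier hL.isClosed.frontier_subset).union (hL.diff hU)
  have hCJ : frontier L ∪ L \ U ⊆ Jᶜ :=
    union_subset (fun y hy hyJ ↦ hy.2 (hJL hyJ)) fun y hy hyJ ↦ hy.2 (hJU hyJ)
  obtain ⟨T, hT, hxT, hCT, hTJ⟩ := h𝒯.exists_mem_superset_of_isCompact hJ_conn.isPreconnected
    hJ.isClosed.isOpen_compl hx hC hCJ
  obtain ⟨hfrontier, hLU⟩ := union_subset_iff.1 hCT
  refine ⟨T, hT, subset_sdiff.2 ⟨hJL.trans interior_subset, subset_compl_iff_disjoint_left.1 hTJ⟩,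
    sdiff_subset_comm.1 hLU, ?_⟩
  rw [compl_sdiff, union_comm]
  exact ⟨⟨x, .inr hxT⟩, isPreconnected_union_of_frontier_subset (h𝒯_conn T hT)
    (frontier_compl L ▸ hfrontier)⟩

theorem exists_exhaustion_of_compacts_in_complement_closure_general [ConnectedSpace X]
    [LocallyConnectedSpace X] [T2Space X] [WeaklyLocallyCompactSpace X]
    [SecondCountableTopology X] {U : Set X} (hU : IsOpen U) :
    ∃ K : ℕ → Set X,
      (∀ m : ℕ, IsCompact (K m) ∧ K m ⊆ U ∧ IsConnected (K m)ᶜ) ∧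
      ∀ J : Set X, IsCompact J → J ⊆ U → IsConnected Jᶜ → ∃ m : ℕ, J ⊆ K m := by
  obtain ⟨𝒯, h𝒯_count, h𝒯, h𝒯_conn⟩ := exists_countable_isChainingBasis_isPreconnected X
  let L := CompactExhaustion.choice X
  let F : Set (Set X) := image2 (fun n T ↦ L n \ T) univ 𝒯 ∩ {K | K ⊆ U ∧ IsConnected Kᶜ}
  have hF_count : F.Countable := (countable_univ.image2 h𝒯_count _).mono inter_subset_left
  have hF_absorb (J : Set X) (hJ : IsCompact J) (hJU : J ⊆ U) (hJ_conn : IsConnected Jᶜ) :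
      ∃ K ∈ F, J ⊆ K := by
    obtain ⟨n, hJn⟩ := L.exists_superset_of_isCompact hJ
    obtain ⟨T, hT, hJT, hTU, hT_conn⟩ := exists_diff_superset_of_isConnected_compl h𝒯 h𝒯_conn hU
      (L.isCompact (n + 1)) hJ hJU (hJn.trans (L.subset_interior_succ n)) hJ_conn
    exact ⟨_, ⟨mem_image2_of_mem (mem_univ (n + 1)) hT, hTU, hT_conn⟩, hJT⟩
  have hF_nonempty : F.Nonempty :=
    (hF_absorb ∅ isCompact_empty (empty_subset U) (compl_empty ▸ isConnected_univ)).imp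
      fun _ ↦ And.left
  obtain ⟨K, hK⟩ := hF_count.exists_eq_range hF_nonempty
  refine ⟨K, fun m ↦ ?_, fun J hJ hJU hJ_conn ↦ ?_⟩
  · obtain ⟨⟨n, -, T, hT, hKm⟩, hKU, hK_conn⟩ := hK.ge (mem_range_self m)
    exact ⟨hKm ▸ (L.isCompact n).diff (h𝒯.isTopologicalBasis.isOpen hT), hKU, hK_conn⟩
  · obtain ⟨_, hKF, hJK⟩ := hF_absorb J hJ hJU hJ_conn
    obtain ⟨m, rfl⟩ := hK.le hKF
    exact ⟨m, hJK⟩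

end

/-- **Proposition 2.4.** If the connected components of an open set `Ω ⊆ ℂ` form a locally
finite family, then there is a sequence of compact subsets of `ℂ ∖ closure Ω`, each with
connected complement, which absorbs every compact subset of `ℂ ∖ closure Ω` with connected
complement. -/
theorem exists_exhaustion_of_compacts_in_complement_closure
    (Ω : Set ℂ) (hΩ : IsOpen Ω)
    (hlf : ∀ z : ℂ, ∃ U ∈ nhds z,
      {C : Set ℂ | (∃ x ∈ Ω, C = connectedComponentIn Ω x) ∧ (C ∩ U).Nonempty}.Finite) :
    ∃ K : ℕ → Set ℂ,
      (∀ m : ℕ, IsCompact (K m) ∧ K m ⊆ (closure Ω)ᶜ ∧ IsConnected (K m)ᶜ) ∧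
      ∀ J : Set ℂ, IsCompact J → J ⊆ (closure Ω)ᶜ → IsConnected Jᶜ → ∃ m : ℕ, J ⊆ K m :=
  exists_exhaustion_of_compacts_in_complement_closure_general isClosed_closure.isOpen_compl
end

section
/- Let Ω ⊆ ℂ be an open set and let K ⊆ closure(Ω) be compact. Let U be the union of those bounded connected components of ℂ ∖ K that are entirely contained in Ω. Then K ∪ U is compact. -/
/-!
Components of an open set in a locally connected space are open, so the complement of `K ∪ U`, a
union of components of `Kᶜ`, is open. For boundedness, let `B` be a closed ball containing `K`: the
ray that starts at a point `z ∉ B` and points away from the centre of `B` never meets `B`, so the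
component of `z` in `Kᶜ` contains that ray and is unbounded. Hence bounded components lie in `B`.
-/

open Set Bornology AffineMap

section LocallyConnected

variable {X : Type*} [TopologicalSpace X]

theorem sdiff_biUnion_connectedComponentIn (V S : Set X) :
    V \ ⋃ z ∈ S, connectedComponentIn V z =
      ⋃ w ∈ V \ ⋃ z ∈ S, connectedComponentIn V z, connectedComponentIn V w := by
  refine Subset.antisymm
    (fun w hw ↦ mem_biUnion hw (mem_connectedComponentIn hw.1)) (iUnion₂_subset fun w hw y hyw ↦ ?_)
  refine ⟨connectedComponentIn_subset V w hyw, fun hy ↦ hw.2 ?_⟩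
  obtain ⟨z, hz, hyz⟩ := mem_iUnion₂.1 hy
  have same_component : connectedComponentIn V w = connectedComponentIn V z :=
    (connectedComponentIn_eq hyw).trans (connectedComponentIn_eq hyz).symm
  exact mem_biUnion hz (same_component ▸ mem_connectedComponentIn hw.1)

theorem isClosed_union_biUnion_connectedComponentIn_compl [LocallyConnectedSpace X] {K : Set X}
    (hK : IsClosed K) (S : Set X) : IsClosed (K ∪ ⋃ z ∈ S, connectedComponentIn Kᶜ z) := by
  rw [← isOpen_compl_iff, compl_union, ← sdiff_eq, sdiff_biUnion_connectedComponentIn]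
  exact isOpen_biUnion fun _ _ ↦ hK.isOpen_compl.connectedComponentIn

end LocallyConnected

theorem lineMap_notMem_of_starConvex {𝕜 E : Type*} [Field 𝕜] [LinearOrder 𝕜]
    [IsStrictOrderedRing 𝕜] [AddCommGroup E] [Module 𝕜 E] {s : Set E} {c z : E}
    (hs : StarConvex 𝕜 c s) (hz : z ∉ s) {t : 𝕜} (ht : 1 ≤ t) : lineMap c z t ∉ s := by
  intro hmem
  have z_mem : c + t⁻¹ • (lineMap c z t - c) ∈ s :=
    hs.add_smul_sub_mem hmem (inv_nonneg.2 (zero_le_one.trans ht)) (inv_le_one_of_one_le₀ ht)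
  rw [lineMap_apply_module', add_sub_cancel_right, inv_smul_smul₀ (zero_lt_one.trans_le ht).ne',
    add_sub_cancel] at z_mem
  exact hz z_mem

section NormedSpace

variable {E : Type*} [NormedAddCommGroup E] [NormedSpace ℝ E] {K s : Set E} {c z : E}

theorem not_isBounded_lineMap_image_Ici (hcz : c ≠ z) (a : ℝ) :
    ¬IsBounded (lineMap c z '' Ici a) := by
  intro h
  have Ici_bounded : IsBounded (Ici a) :=
    ((antilipschitzWith_lineMap hcz).isBounded_preimage h).subset (subset_preimage_image _ _)
  exact not_bddAbove_Ici a Ici_bounded.bddAbove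

theorem mem_of_isBounded_connectedComponentIn_compl (hs : StarConvex ℝ c s) (hc : c ∈ s)
    (hKs : K ⊆ s) (hz : IsBounded (connectedComponentIn Kᶜ z)) : z ∈ s := by
  by_contra hzs
  have ray_avoids_K : lineMap c z '' Ici (1 : ℝ) ⊆ Kᶜ :=
    image_subset_iff.2 fun _ ht hK ↦ lineMap_notMem_of_starConvex hs hzs ht (hKs hK)
  have ray_preconnected : IsPreconnected (lineMap c z '' Ici (1 : ℝ)) :=
    isPreconnected_Ici.image _ lineMap_continuous.continuousOn
  have ray_subset : lineMap c z '' Ici (1 : ℝ) ⊆ connectedComponentIn Kᶜ z :=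
    ray_preconnected.subset_connectedComponentIn ⟨1, self_mem_Ici, lineMap_apply_one c z⟩
      ray_avoids_K
  exact not_isBounded_lineMap_image_Ici (ne_of_mem_of_not_mem hc hzs) 1 (hz.subset ray_subset)

theorem isBounded_biUnion_connectedComponentIn_compl (hK : IsBounded K) {S : Set E}
    (hS : ∀ z ∈ S, IsBounded (connectedComponentIn Kᶜ z)) :
    IsBounded (⋃ z ∈ S, connectedComponentIn Kᶜ z) := by
  obtain ⟨r, hr, hKr⟩ := hK.subset_closedBall_lt 0 0
  have ball_starConvex : StarConvex ℝ (0 : E) (Metric.closedBall 0 r) :=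
    (convex_closedBall 0 r).starConvex (Metric.mem_closedBall_self hr.le)
  refine (Metric.isBounded_closedBall (x := (0 : E)) (r := r)).subset
    (iUnion₂_subset fun z hz w hw ↦ ?_)
  exact mem_of_isBounded_connectedComponentIn_compl ball_starConvex
    (Metric.mem_closedBall_self hr.le) hKr (connectedComponentIn_eq hw ▸ hS z hz)

theorem isCompact_union_bounded_components_in_Omega_general [ProperSpace E] (hK : IsCompact K)
    {S : Set E} (hS : ∀ z ∈ S, IsBounded (connectedComponentIn Kᶜ z)) :
    IsCompact (K ∪ ⋃ z ∈ S, connectedComponentIn Kᶜ z) :=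
  Metric.isCompact_of_isClosed_isBounded
    (isClosed_union_biUnion_connectedComponentIn_compl hK.isClosed S)
    (hK.isBounded.union (isBounded_biUnion_connectedComponentIn_compl hK.isBounded hS))

end NormedSpace

/-- The key step in Proposition 2.8: for `Ω ⊆ ℂ` open and `K ⊆ closure Ω` compact, the
union of `K` with all bounded connected components of `ℂ ∖ K` entirely contained in `Ω`
is compact. -/
theorem isCompact_union_bounded_components_in_Omega
    (Ω : Set ℂ) (hΩ : IsOpen Ω) (K : Set ℂ) (hK : IsCompact K) (hKΩ : K ⊆ closure Ω) :
    IsCompact (K ∪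
      ⋃ z ∈ {z : ℂ | z ∉ K ∧ Bornology.IsBounded (connectedComponentIn Kᶜ z) ∧
        connectedComponentIn Kᶜ z ⊆ Ω}, connectedComponentIn Kᶜ z) :=
  isCompact_union_bounded_components_in_Omega_general hK fun _ hz ↦ hz.2.1
end
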